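/- Let n ≥ 3, b > 0, 0 ≤ ε < 2/(n−2), N = 2n/(n−2), and let B be the open unit ball of ℝⁿ. Let V be continuous on B̄ with 0 ≤ V(x) ≤ b, and let u ∈ C²(B) ∩ C⁰(B̄) satisfy u > 0 in B, u = 0 on ∂B and −∑ᵢ ∂²u/∂xᵢ² = V u^{N−1−ε} in B. Then (sup_{B̄} u)^{4/(n−2)−ε} ≥ n/b; in particular the supremum of any such solution is bounded below by a positive constant depending only on n, b and ε. -/

import Mathlib

/-!
The Laplacian is nonpositive at an interior maximum; applied to `u + δ‖x‖²` with `δ → 0`, this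
gives the weak maximum principle for `Δu ≥ 0`. If `-Δu ≤ K` on an `n`-dimensional domain contained
in the ball of radius `R` about `c`, and `u ≤ 0` on its boundary, the principle compares `u` with
the torsion function `K (R² - ‖x - c‖²) / (2n)`, whose Laplacian is `-K`. Hence `2n sup u ≤ K R²`.
For a positive solution of `-Δu ≤ b uᵖ`, one takes `K = b (sup u)ᵖ` and divides by `sup u`.
-/

open MeasureTheory Metric Real

/-- The Euclidean Laplacian `∑ i, ∂²u/∂xᵢ²` (without sign). -/
noncomputable def lapl {n : ℕ} (u : EuclideanSpace ℝ (Fin n) → ℝ)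
    (x : EuclideanSpace ℝ (Fin n)) : ℝ :=
  ∑ i : Fin n,
    fderiv ℝ (fun y => fderiv ℝ u y (EuclideanSpace.single i 1)) x (EuclideanSpace.single i 1)

open Bornology Module InnerProductSpace Laplacian Filter Topology

theorem deriv_deriv_nonpos_of_isLocalMax {f : ℝ → ℝ} {a : ℝ} (hf : ContinuousAt f a)
    (hmax : IsLocalMax f a) : deriv (deriv f) a ≤ 0 := by
  by_contra! hpos
  have hmin : IsLocalMin f a := isLocalMin_of_deriv_deriv_pos hpos hmax.deriv_eq_zero hf
  have hconst : f =ᶠ[𝓝 a] fun _ ↦ f a := by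
    filter_upwards [hmax, hmin] with t using le_antisymm
  have hzero : deriv (deriv f) a = 0 := by simpa using hconst.deriv.deriv_eq
  exact hpos.ne' hzero

section NormedSpace

variable {E F : Type*} [NormedAddCommGroup E] [NormedSpace ℝ E]
  [NormedAddCommGroup F] [NormedSpace ℝ F]

theorem fderiv_fderiv_apply_eq_iteratedFDeriv_two {u : E → F} {x : E} (hu : ContDiffAt ℝ 2 u x)
    (v w : E) : fderiv ℝ (fun y ↦ fderiv ℝ u y w) x v = iteratedFDeriv ℝ 2 u x ![v, w] := by
  have hdiff : DifferentiableAt ℝ (fderiv ℝ u) x :=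
    (hu.fderiv_right (m := 1) (by norm_num)).differentiableAt one_ne_zero
  rw [iteratedFDeriv_two_apply, fderiv_clm_apply hdiff (differentiableAt_const w)]
  simp

theorem deriv_deriv_comp_add_smul_eq_iteratedFDeriv_two {u : E → F} {x : E}
    (hu : ContDiffAt ℝ 2 u x) (v : E) :
    deriv (deriv fun t : ℝ ↦ u (x + t • v)) 0 = iteratedFDeriv ℝ 2 u x ![v, v] := by
  have hline (t : ℝ) : HasDerivAt (fun t : ℝ ↦ x + t • v) v t := by
    simpa using ((hasDerivAt_id t).smul_const v).const_add x
  have hline_tendsto : Tendsto (fun t : ℝ ↦ x + t • v) (𝓝 0) (𝓝 x) := by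
    simpa using (hline 0).continuousAt.tendsto
  have hu_near : ∀ᶠ y in 𝓝 x, DifferentiableAt ℝ u y := by
    filter_upwards [hu.eventually (by simp)] with y hy using hy.differentiableAt two_ne_zero
  have hderiv : deriv (fun t : ℝ ↦ u (x + t • v)) =ᶠ[𝓝 0] fun t ↦ fderiv ℝ u (x + t • v) v := by
    filter_upwards [hline_tendsto.eventually hu_near] with t ht
    exact (ht.hasFDerivAt.comp_hasDerivAt t (hline t)).deriv
  have hdiff : DifferentiableAt ℝ (fun y ↦ fderiv ℝ u y v) (x + (0 : ℝ) • v) := by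
    rw [zero_smul, add_zero]
    exact ((hu.fderiv_right (m := 1) (by norm_num)).differentiableAt one_ne_zero).clm_apply
      (differentiableAt_const v)
  calc deriv (deriv fun t : ℝ ↦ u (x + t • v)) 0
      = deriv (fun t : ℝ ↦ fderiv ℝ u (x + t • v) v) 0 := hderiv.deriv_eq
    _ = fderiv ℝ (fun y ↦ fderiv ℝ u y v) x v := by
      simpa [Function.comp_def] using (hdiff.hasFDerivAt.comp_hasDerivAt (0 : ℝ) (hline 0)).deriv
    _ = iteratedFDeriv ℝ 2 u x ![v, v] := fderiv_fderiv_apply_eq_iteratedFDeriv_two hu v v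

theorem iteratedFDeriv_two_nonpos_of_isLocalMax {u : E → ℝ} {x : E} (hu : ContDiffAt ℝ 2 u x)
    (hmax : IsLocalMax u x) (v : E) : iteratedFDeriv ℝ 2 u x ![v, v] ≤ 0 := by
  have hline : ContinuousAt (fun t : ℝ ↦ x + t • v) 0 := by fun_prop
  rw [← deriv_deriv_comp_add_smul_eq_iteratedFDeriv_two hu v]
  refine deriv_deriv_nonpos_of_isLocalMax ?_ ?_
  · exact ContinuousAt.comp (by simpa using hu.continuousAt) hline
  · exact IsLocalMax.comp_continuous (f := u) (by simpa using hmax) hline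

end NormedSpace

section Laplacian

theorem lapl_eq_laplacian {n : ℕ} {u : EuclideanSpace ℝ (Fin n) → ℝ}
    {x : EuclideanSpace ℝ (Fin n)} (hu : ContDiffAt ℝ 2 u x) : lapl u x = Δ u x := by
  simp only [lapl, fderiv_fderiv_apply_eq_iteratedFDeriv_two hu,
    laplacian_eq_iteratedFDeriv_orthonormalBasis u (EuclideanSpace.basisFun (Fin n) ℝ),
    EuclideanSpace.basisFun_apply]

variable {E : Type*} [NormedAddCommGroup E] [InnerProductSpace ℝ E] {u : E → ℝ} {Ω : Set E}

theorem contDiff_norm_sub_sq {m : WithTop ℕ∞} (c : E) : ContDiff ℝ m fun y ↦ ‖y - c‖ ^ 2 :=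
  (contDiff_id.sub contDiff_const).norm_sq ℝ

variable [FiniteDimensional ℝ E]

theorem laplacian_nonpos_of_isLocalMax {x : E} (hu : ContDiffAt ℝ 2 u x)
    (hmax : IsLocalMax u x) : Δ u x ≤ 0 := by
  rw [laplacian_eq_iteratedFDeriv_stdOrthonormalBasis]
  exact Finset.sum_nonpos fun i _ ↦ iteratedFDeriv_two_nonpos_of_isLocalMax hu hmax _

theorem laplacian_norm_sub_sq (c x : E) :
    Δ (fun y ↦ ‖y - c‖ ^ 2) x = 2 * (finrank ℝ E : ℝ) := by
  have hfirst (y v : E) : fderiv ℝ (fun z : E ↦ ‖z - c‖ ^ 2) y v = 2 * inner ℝ (y - c) v := by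
    rw [fderiv_comp_sub (f := fun z : E ↦ ‖z‖ ^ 2), fderiv_norm_sq_apply]
    simp [inner_sub_left]
  have hsecond (v : E) : iteratedFDeriv ℝ 2 (fun y : E ↦ ‖y - c‖ ^ 2) x ![v, v] = 2 * ‖v‖ ^ 2 := by
    have hinner : DifferentiableAt ℝ (fun y : E ↦ inner ℝ (y - c) v) x :=
      .inner ℝ (by fun_prop) (by fun_prop)
    rw [← fderiv_fderiv_apply_eq_iteratedFDeriv_two (contDiff_norm_sub_sq c).contDiffAt]
    simp_rw [hfirst]
    rw [fderiv_const_mul hinner, smul_apply,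
      fderiv_inner_apply ℝ (by fun_prop) (by fun_prop)]
    simp [fderiv_sub_const]
  simp [laplacian_eq_iteratedFDeriv_stdOrthonormalBasis, hsecond, mul_comm]

theorem laplacian_add_const_mul_norm_sub_sq {x : E} (hu : ContDiffAt ℝ 2 u x) (k : ℝ) (c : E) :
    Δ (fun y ↦ u y + k * ‖y - c‖ ^ 2) x = Δ u x + 2 * finrank ℝ E * k := by
  have hsq : ContDiffAt ℝ 2 (fun y : E ↦ ‖y - c‖ ^ 2) x := (contDiff_norm_sub_sq c).contDiffAt
  have hksq : ContDiffAt ℝ 2 (k • fun y : E ↦ ‖y - c‖ ^ 2) x := hsq.const_smul k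
  have hsum : (fun y ↦ u y + k * ‖y - c‖ ^ 2) = u + k • fun y ↦ ‖y - c‖ ^ 2 := rfl
  rw [hsum, hu.laplacian_add hksq, laplacian_smul k hsq, laplacian_norm_sub_sq, smul_eq_mul]
  ring

theorem exists_mem_frontier_isMaxOn_of_laplacian_pos (hΩ : IsOpen Ω) (hbdd : IsBounded Ω)
    (hne : Ω.Nonempty) (hu : ContDiffOn ℝ 2 u Ω) (huc : ContinuousOn u (closure Ω))
    (hlap : ∀ x ∈ Ω, 0 < Δ u x) : ∃ x ∈ frontier Ω, IsMaxOn u (closure Ω) x := by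
  obtain ⟨x, hx, hmax⟩ := hbdd.isCompact_closure.exists_isMaxOn hne.closure huc
  refine ⟨x, ⟨hx, fun hx_int ↦ ?_⟩, hmax⟩
  have hxΩ : x ∈ Ω := interior_subset hx_int
  have hloc : IsLocalMax u x := (hmax.on_subset subset_closure).isLocalMax (hΩ.mem_nhds hxΩ)
  exact (hlap x hxΩ).not_ge
    (laplacian_nonpos_of_isLocalMax (hu.contDiffAt (hΩ.mem_nhds hxΩ)) hloc)

variable [Nontrivial E]

theorem le_of_laplacian_nonneg_of_frontier_le (hΩ : IsOpen Ω) (hbdd : IsBounded Ω)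
    (hu : ContDiffOn ℝ 2 u Ω) (huc : ContinuousOn u (closure Ω)) (hlap : ∀ x ∈ Ω, 0 ≤ Δ u x)
    {C : ℝ} (hC : ∀ x ∈ frontier Ω, u x ≤ C) {y : E} (hy : y ∈ closure Ω) : u y ≤ C := by
  obtain ⟨R, hR⟩ := hbdd.closure.exists_norm_le
  have hperturbed : ∀ δ > 0, u y ≤ C + δ * R ^ 2 := by
    intro δ hδ
    have hlap_pos : ∀ x ∈ Ω, 0 < Δ (fun z ↦ u z + δ * ‖z - 0‖ ^ 2) x := by
      intro x hx
      rw [laplacian_add_const_mul_norm_sub_sq (hu.contDiffAt (hΩ.mem_nhds hx))]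
      have hdim : 0 < (finrank ℝ E : ℝ) := mod_cast finrank_pos
      have := hlap x hx
      positivity
    obtain ⟨x, hx, hmax⟩ := exists_mem_frontier_isMaxOn_of_laplacian_pos hΩ hbdd
      (closure_nonempty_iff.mp ⟨y, hy⟩)
      (hu.add (contDiff_const.mul (contDiff_norm_sub_sq _)).contDiffOn)
      (huc.add (by fun_prop)) hlap_pos
    calc u y ≤ u y + δ * ‖y - 0‖ ^ 2 := le_add_of_nonneg_right (by positivity)
      _ ≤ u x + δ * ‖x - 0‖ ^ 2 := hmax hy
      _ ≤ C + δ * R ^ 2 := by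
        rw [sub_zero]
        gcongr
        · exact hC x hx
        · exact hR x (frontier_subset_closure hx)
  have hlim : Tendsto (fun δ : ℝ ↦ C + δ * R ^ 2) (𝓝[>] 0) (𝓝 C) := by
    have : Continuous fun δ : ℝ ↦ C + δ * R ^ 2 := by fun_prop
    simpa using (this.tendsto 0).mono_left nhdsWithin_le_nhds
  exact ge_of_tendsto hlim (eventually_mem_nhdsWithin.mono hperturbed)

theorem two_mul_finrank_mul_le_of_neg_laplacian_le {c : E} {R K : ℝ} (hΩ : IsOpen Ω)
    (hΩR : Ω ⊆ closedBall c R) (hu : ContDiffOn ℝ 2 u Ω) (huc : ContinuousOn u (closure Ω))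
    (hbd : ∀ x ∈ frontier Ω, u x ≤ 0) (hK : 0 ≤ K) (hlap : ∀ x ∈ Ω, -Δ u x ≤ K)
    {y : E} (hy : y ∈ closure Ω) : 2 * finrank ℝ E * u y ≤ K * (R ^ 2 - ‖y - c‖ ^ 2) := by
  have hdim : 0 < 2 * (finrank ℝ E : ℝ) := mul_pos two_pos (mod_cast finrank_pos)
  set k : ℝ := K / (2 * finrank ℝ E)
  have hkK : 2 * finrank ℝ E * k = K := mul_div_cancel₀ K hdim.ne'
  have hcompare : u y + k * ‖y - c‖ ^ 2 ≤ k * R ^ 2 := by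
    refine le_of_laplacian_nonneg_of_frontier_le (u := fun z ↦ u z + k * ‖z - c‖ ^ 2) hΩ
      (isBounded_closedBall.subset hΩR)
      (hu.add (contDiff_const.mul (contDiff_norm_sub_sq _)).contDiffOn)
      (huc.add (by fun_prop)) (fun x hx ↦ ?_) (fun x hx ↦ ?_) hy
    · rw [laplacian_add_const_mul_norm_sub_sq (hu.contDiffAt (hΩ.mem_nhds hx)), hkK]
      linarith [hlap x hx]
    · have hxR : ‖x - c‖ ≤ R :=
        mem_closedBall_iff_norm.mp
          (closure_minimal hΩR isClosed_closedBall (frontier_subset_closure hx))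
      calc u x + k * ‖x - c‖ ^ 2 ≤ 0 + k * R ^ 2 := by gcongr; exact hbd x hx
        _ = k * R ^ 2 := zero_add _
  calc 2 * finrank ℝ E * u y ≤ 2 * finrank ℝ E * (k * R ^ 2 - k * ‖y - c‖ ^ 2) := by
        gcongr; linarith
    _ = 2 * finrank ℝ E * k * (R ^ 2 - ‖y - c‖ ^ 2) := by ring
    _ = K * (R ^ 2 - ‖y - c‖ ^ 2) := by rw [hkK]

theorem sup_rpow_lower_bound_general {c : E} {R b p : ℝ} (hΩ : IsOpen Ω) (hne : Ω.Nonempty)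
    (hΩR : Ω ⊆ closedBall c R) (hb : 0 < b) (hp : 0 ≤ p) (hu : ContDiffOn ℝ 2 u Ω)
    (huc : ContinuousOn u (closure Ω)) (hupos : ∀ x ∈ Ω, 0 < u x)
    (hbd : ∀ x ∈ frontier Ω, u x ≤ 0) (hpde : ∀ x ∈ Ω, -Δ u x ≤ b * u x ^ p) :
    2 * finrank ℝ E / (b * R ^ 2) ≤ sSup (u '' closure Ω) ^ (p - 1) := by
  have hcompact : IsCompact (closure Ω) := (isBounded_closedBall.subset hΩR).isCompact_closure
  obtain ⟨y, hy, hsup, hmax⟩ := hcompact.exists_sSup_image_eq_and_ge hne.closure huc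
  rw [hsup]
  obtain ⟨z, hz⟩ := hne
  have hypos : 0 < u y := (hupos z hz).trans_le (hmax z (subset_closure hz))
  have hlap : ∀ x ∈ Ω, -Δ u x ≤ b * u y ^ p := fun x hx ↦ (hpde x hx).trans <| by
    have := (hupos x hx).le
    gcongr
    exact hmax x (subset_closure hx)
  have hbound : 2 * finrank ℝ E * u y ≤ u y ^ (p - 1) * (b * R ^ 2) * u y :=
    calc 2 * finrank ℝ E * u y ≤ b * u y ^ p * (R ^ 2 - ‖y - c‖ ^ 2) :=
          two_mul_finrank_mul_le_of_neg_laplacian_le hΩ hΩR hu huc hbd (by positivity) hlap hy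
      _ ≤ b * u y ^ p * R ^ 2 := by gcongr; exact sub_le_self _ (by positivity)
      _ = u y ^ (p - 1) * (b * R ^ 2) * u y := by
        rw [rpow_sub_one hypos.ne']
        field_simp
  exact div_le_of_le_mul₀ (by positivity) (by positivity) (le_of_mul_le_mul_right hbound hypos)

end Laplacian

/-- if `u` is a positive solution of `Δu = V u^{N−1−ε}` on the unit
ball `B` of `ℝⁿ`, `n ≥ 3`, vanishing on `∂B`, with `0 ≤ V ≤ b`, then
`(sup_{B̄} u)^{4/(n−2)−ε} ≥ n/b`. -/
theorem sup_rpow_lower_bound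
    (n : ℕ) (hn : 3 ≤ n) (b : ℝ) (hb : 0 < b)
    (ε : ℝ) (hε₀ : 0 ≤ ε) (hε₁ : ε < 2 / ((n : ℝ) - 2))
    (V u : EuclideanSpace ℝ (Fin n) → ℝ)
    (hV : ContinuousOn V (closedBall (0 : EuclideanSpace ℝ (Fin n)) 1))
    (hVb : ∀ x ∈ closedBall (0 : EuclideanSpace ℝ (Fin n)) 1, 0 ≤ V x ∧ V x ≤ b)
    (hu : ContDiffOn ℝ 2 u (ball (0 : EuclideanSpace ℝ (Fin n)) 1))
    (huc : ContinuousOn u (closedBall (0 : EuclideanSpace ℝ (Fin n)) 1))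
    (hupos : ∀ x ∈ ball (0 : EuclideanSpace ℝ (Fin n)) 1, 0 < u x)
    (hubd : ∀ x ∈ sphere (0 : EuclideanSpace ℝ (Fin n)) 1, u x = 0)
    (hpde : ∀ x ∈ ball (0 : EuclideanSpace ℝ (Fin n)) 1,
      -lapl u x = V x * u x ^ (2 * (n : ℝ) / ((n : ℝ) - 2) - 1 - ε)) :
    (n : ℝ) / b ≤ (sSup (u '' closedBall (0 : EuclideanSpace ℝ (Fin n)) 1))
      ^ (4 / ((n : ℝ) - 2) - ε) := by
  have hn2 : (0 : ℝ) < n - 2 := by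
    have : (3 : ℝ) ≤ n := mod_cast hn
    linarith
  have : Nonempty (Fin n) := ⟨⟨0, by lia⟩⟩
  set p : ℝ := 2 * n / (n - 2) - 1 - ε with hp_def
  have hexp : 4 / ((n : ℝ) - 2) - ε = p - 1 := by rw [hp_def]; field_simp; ring
  have hp : 0 ≤ p := by
    have : 2 / ((n : ℝ) - 2) ≤ 4 / (n - 2) := by gcongr; norm_num
    linarith
  have hclosure := closure_ball (0 : EuclideanSpace ℝ (Fin n)) one_ne_zero
  have hsub : ∀ x ∈ ball (0 : EuclideanSpace ℝ (Fin n)) 1, -Δ u x ≤ b * u x ^ p := fun x hx ↦ by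
    rw [← lapl_eq_laplacian (hu.contDiffAt (isOpen_ball.mem_nhds hx)), hpde x hx]
    have := (hupos x hx).le
    gcongr
    exact (hVb x (ball_subset_closedBall hx)).2
  have hgeneral := sup_rpow_lower_bound_general isOpen_ball ⟨0, mem_ball_self one_pos⟩
    ball_subset_closedBall hb hp hu (hclosure ▸ huc) hupos
    (fun x hx ↦ (hubd x (frontier_ball_subset_sphere hx)).le) hsub
  rw [hclosure, finrank_euclideanSpace_fin, one_pow, mul_one, ← hexp] at hgeneral
  exact le_trans (by gcongr; linarith) hgeneral
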